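/- Assume in addition the contact metric algebraic relation h∘φ = −φ∘h. Then for all X, Y ∈ V orthogonal to ξ one has R(X,φX,Y,φY) = R(X,Y,X,Y) + R(X,φY,X,φY) − 2(f₁−f₂)·P(X,Y,X,φY) − 2f₄·P(X,Y,hX,φY). -/

import Mathlib

open RealInnerProductSpace

variable {V : Type*} [NormedAddCommGroup V] [InnerProductSpace ℝ V]

/-- R₁(X,Y)Z = ⟨Y,Z⟩X − ⟨X,Z⟩Y -/
noncomputable def R1 (X Y Z : V) : V := ⟪Y, Z⟫ • X - ⟪X, Z⟫ • Y

/-- R₂(X,Y)Z = ⟨X,φZ⟩φY − ⟨Y,φZ⟩φX + 2⟨X,φY⟩φZ -/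
noncomputable def R2 (φ : V →ₗ[ℝ] V) (X Y Z : V) : V :=
  ⟪X, φ Z⟫ • φ Y - ⟪Y, φ Z⟫ • φ X + (2 * ⟪X, φ Y⟫) • φ Z

/-- R₃(X,Y)Z = η(X)η(Z)Y − η(Y)η(Z)X + ⟨X,Z⟩η(Y)ξ − ⟨Y,Z⟩η(X)ξ, where η(X) = ⟨X,ξ⟩ -/
noncomputable def R3 (ξ : V) (X Y Z : V) : V :=
  (⟪X, ξ⟫ * ⟪Z, ξ⟫) • Y - (⟪Y, ξ⟫ * ⟪Z, ξ⟫) • X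
    + (⟪X, Z⟫ * ⟪Y, ξ⟫) • ξ - (⟪Y, Z⟫ * ⟪X, ξ⟫) • ξ

/-- R₄(X,Y)Z = ⟨Y,Z⟩hX − ⟨X,Z⟩hY + ⟨hY,Z⟩X − ⟨hX,Z⟩Y -/
noncomputable def R4 (h : V →ₗ[ℝ] V) (X Y Z : V) : V :=
  ⟪Y, Z⟫ • h X - ⟪X, Z⟫ • h Y + ⟪h Y, Z⟫ • X - ⟪h X, Z⟫ • Y

/-- R₅(X,Y)Z = ⟨hY,Z⟩hX − ⟨hX,Z⟩hY + ⟨φhX,Z⟩φhY − ⟨φhY,Z⟩φhX -/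
noncomputable def R5 (φ h : V →ₗ[ℝ] V) (X Y Z : V) : V :=
  ⟪h Y, Z⟫ • h X - ⟪h X, Z⟫ • h Y
    + ⟪φ (h X), Z⟫ • φ (h Y) - ⟪φ (h Y), Z⟫ • φ (h X)

/-- R₆(X,Y)Z = η(X)η(Z)hY − η(Y)η(Z)hX + ⟨hX,Z⟩η(Y)ξ − ⟨hY,Z⟩η(X)ξ -/
noncomputable def R6 (ξ : V) (h : V →ₗ[ℝ] V) (X Y Z : V) : V :=
  (⟪X, ξ⟫ * ⟪Z, ξ⟫) • h Y - (⟪Y, ξ⟫ * ⟪Z, ξ⟫) • h X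
    + (⟪h X, Z⟫ * ⟪Y, ξ⟫) • ξ - (⟪h Y, Z⟫ * ⟪X, ξ⟫) • ξ

/-- R = f₁R₁ + f₂R₂ + f₃R₃ + f₄R₄ + f₅R₅ + f₆R₆ -/
noncomputable def Rc (φ h : V →ₗ[ℝ] V) (ξ : V) (f₁ f₂ f₃ f₄ f₅ f₆ : ℝ) (X Y Z : V) : V :=
  f₁ • R1 X Y Z + f₂ • R2 φ X Y Z + f₃ • R3 ξ X Y Z + f₄ • R4 h X Y Z
    + f₅ • R5 φ h X Y Z + f₆ • R6 ξ h X Y Z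

/-- R(X,Y,Z,W) = ⟨R(X,Y)Z, W⟩ -/
noncomputable def Rq (φ h : V →ₗ[ℝ] V) (ξ : V) (f₁ f₂ f₃ f₄ f₅ f₆ : ℝ) (X Y Z W : V) : ℝ :=
  ⟪Rc φ h ξ f₁ f₂ f₃ f₄ f₅ f₆ X Y Z, W⟫

/-- P(X,Y,Z,W) = ⟨X,φZ⟩⟨Y,W⟩ − ⟨X,φW⟩⟨Y,Z⟩ − ⟨Y,φZ⟩⟨X,W⟩ + ⟨Y,φW⟩⟨X,Z⟩ -/
noncomputable def Pq (φ : V →ₗ[ℝ] V) (X Y Z W : V) : ℝ :=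
  ⟪X, φ Z⟫ * ⟪Y, W⟫ - ⟪X, φ W⟫ * ⟪Y, Z⟫
    - ⟪Y, φ Z⟫ * ⟪X, W⟫ + ⟪Y, φ W⟫ * ⟪X, Z⟫

/-!
For a tensor `T` of Kähler type, the Bianchi identity gives
`T(X,φX,Y,φY) = T(X,Y,X,Y) + T(X,φY,X,φY)`. The failure of this identity is linear in `T`, so it
is computed on each `Rᵢ`. `R₁` and `R₂` contribute opposite multiples of `P(X,Y,X,φY)` (their sum
has the form of the curvature of a complex space form), `R₄` contributes `-2P(X,Y,hX,φY)`, and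
`R₃`, `R₆` vanish on vectors orthogonal to `ξ`. Finally `R₅` is the difference of the Gauss tensors
of `h` and `φh`; both operators are symmetric and anticommute with `φ`, and the Gauss tensor of any
such operator satisfies the identity.
-/

/-- Skew-symmetry of an operator with respect to the inner product: the counterpart of
`LinearMap.IsSymmetric`, in the same pointwise form rather than as `(innerₗ V).IsSkewAdjoint φ`. -/
def IsSkewSymmetric (φ : V →ₗ[ℝ] V) : Prop := ∀ X Y : V, ⟪φ X, Y⟫ = -⟪X, φ Y⟫

/-- An almost contact metric structure with Reeb vector `ξ`, the form `η` being encoded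
as `⟪·, ξ⟫`. -/
structure IsAlmostContactMetric (φ : V →ₗ[ℝ] V) (ξ : V) : Prop where
  norm_reeb : ‖ξ‖ = 1
  map_map_apply : ∀ X : V, φ (φ X) = -X + ⟪X, ξ⟫ • ξ
  inner_map_map : ∀ X Y : V, ⟪φ X, φ Y⟫ = ⟪X, Y⟫ - ⟪X, ξ⟫ * ⟪Y, ξ⟫

/-- The amount by which `T(X,φX,Y,φY) = T(X,Y,X,Y) + T(X,φY,X,φY)`, valid for Kähler curvature
tensors, fails for `T`; bundled as a linear functional of `T` so that it can be evaluated term by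
term. -/
def kaehlerDefect (φ : V →ₗ[ℝ] V) (X Y : V) : (V → V → V → V) →ₗ[ℝ] ℝ where
  toFun T := ⟪T X (φ X) Y, φ Y⟫ - ⟪T X Y X, Y⟫ - ⟪T X (φ Y) X, φ Y⟫
  map_add' S T := by
    simp only [Pi.add_apply, inner_add_left]
    ring
  map_smul' c T := by
    simp only [Pi.smul_apply, real_inner_smul_left, smul_eq_mul, RingHom.id_apply]
    ring

theorem kaehlerDefect_apply (φ : V →ₗ[ℝ] V) (X Y : V) (T : V → V → V → V) :
    kaehlerDefect φ X Y T = ⟪T X (φ X) Y, φ Y⟫ - ⟪T X Y X, Y⟫ - ⟪T X (φ Y) X, φ Y⟫ :=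
  rfl

/-- The curvature term contributed by a shape operator `A` in the Gauss equation. -/
def gaussTensor (A : V →ₗ[ℝ] V) (X Y Z : V) : V := ⟪A Y, Z⟫ • A X - ⟪A X, Z⟫ • A Y

section

variable {φ A h : V →ₗ[ℝ] V} {ξ X Y : V}

namespace IsAlmostContactMetric

theorem map_reeb (hφ : IsAlmostContactMetric φ ξ) : φ ξ = 0 := by
  have hξξ : ⟪ξ, ξ⟫ = 1 := inner_self_eq_one_of_norm_eq_one hφ.norm_reeb
  rw [← inner_self_eq_zero (𝕜 := ℝ), hφ.inner_map_map, hξξ, mul_one, sub_self]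

theorem inner_map_reeb (hφ : IsAlmostContactMetric φ ξ) (X : V) : ⟪φ X, ξ⟫ = 0 := by
  have hcube : φ (φ (φ X)) = -φ X := by
    rw [hφ.map_map_apply X, map_add, map_neg, map_smul, hφ.map_reeb, smul_zero, add_zero]
  have hsmul : ⟪φ X, ξ⟫ • ξ = 0 := by rwa [hφ.map_map_apply (φ X), add_eq_left] at hcube
  have hξ : ξ ≠ 0 := norm_ne_zero_iff.1 (hφ.norm_reeb ▸ one_ne_zero)
  exact (smul_eq_zero.1 hsmul).resolve_right hξ

theorem isSkewSymmetric (hφ : IsAlmostContactMetric φ ξ) : IsSkewSymmetric φ := by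
  intro X Y
  have h := hφ.inner_map_map X (φ Y)
  rw [hφ.map_map_apply, inner_add_right, inner_neg_right, real_inner_smul_right,
    hφ.inner_map_reeb, hφ.inner_map_reeb] at h
  linarith

theorem map_map_of_inner_reeb_eq_zero (hφ : IsAlmostContactMetric φ ξ) (hX : ⟪X, ξ⟫ = 0) :
    φ (φ X) = -X := by
  rw [hφ.map_map_apply, hX, zero_smul, add_zero]

end IsAlmostContactMetric

namespace IsSkewSymmetric

theorem inner_map_swap (hφ : IsSkewSymmetric φ) (X Y : V) : ⟪Y, φ X⟫ = -⟪X, φ Y⟫ := by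
  rw [real_inner_comm, hφ]

theorem inner_map_self (hφ : IsSkewSymmetric φ) (X : V) : ⟪X, φ X⟫ = 0 :=
  self_eq_neg.1 (hφ.inner_map_swap X X)

theorem inner_map_map (hφ : IsSkewSymmetric φ) (hY : φ (φ Y) = -Y) (X : V) :
    ⟪φ X, φ Y⟫ = ⟪X, Y⟫ := by
  rw [hφ, hY, inner_neg_right, neg_neg]

theorem inner_map_eq_zero (hφ : IsSkewSymmetric φ) (hξ : φ ξ = 0) (X : V) : ⟪φ X, ξ⟫ = 0 := by
  rw [hφ, hξ, inner_zero_right, neg_zero]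

theorem inner_eq_zero_of_map_map (hφ : IsSkewSymmetric φ) (hξ : φ ξ = 0) (hX : φ (φ X) = -X) :
    ⟪X, ξ⟫ = 0 := by
  rw [← neg_eq_zero, ← inner_neg_left, ← hX]
  exact hφ.inner_map_eq_zero hξ (φ X)

theorem isSymmetric_comp (hφ : IsSkewSymmetric φ) (hA : A.IsSymmetric)
    (hanti : ∀ X, A (φ X) = -φ (A X)) : (φ ∘ₗ A).IsSymmetric := by
  intro X Y
  calc ⟪φ (A X), Y⟫ = -⟪X, A (φ Y)⟫ := by rw [hφ, hA]
    _ = ⟪X, φ (A Y)⟫ := by rw [hanti, inner_neg_right, neg_neg]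

end IsSkewSymmetric

theorem Pq_map_right (hφ : IsSkewSymmetric φ) (hY : φ (φ Y) = -Y) (X Z : V) :
    Pq φ X Y Z (φ Y) = ⟪X, Y⟫ * ⟪Z, Y⟫ + ⟪X, φ Y⟫ * ⟪Z, φ Y⟫ - ⟪X, Z⟫ * ⟪Y, Y⟫ := by
  simp only [Pq, hY, inner_neg_right, hφ.inner_map_self, hφ.inner_map_swap Z Y,
    real_inner_comm Z Y]
  ring

theorem kaehlerDefect_R1 (hφ : IsSkewSymmetric φ) (hY : φ (φ Y) = -Y) :
    kaehlerDefect φ X Y R1 = -2 * Pq φ X Y X (φ Y) := by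
  have hmixed : ⟪R1 X (φ X) Y, φ Y⟫ = -(⟪X, Y⟫ ^ 2 + ⟪X, φ Y⟫ ^ 2) := by
    rw [R1, inner_sub_left, real_inner_smul_left, real_inner_smul_left, hφ X Y,
      hφ.inner_map_map hY]
    ring
  have hsec (Z : V) : ⟪R1 X Z X, Z⟫ = ⟪X, Z⟫ ^ 2 - ⟪X, X⟫ * ⟪Z, Z⟫ := by
    rw [R1, inner_sub_left, real_inner_smul_left, real_inner_smul_left, real_inner_comm X Z]
    ring
  rw [kaehlerDefect_apply, hmixed, hsec, hsec, hφ.inner_map_map hY, Pq_map_right hφ hY]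
  ring

theorem kaehlerDefect_R2 (hφ : IsSkewSymmetric φ) (hX : φ (φ X) = -X) (hY : φ (φ Y) = -Y) :
    kaehlerDefect φ X Y (R2 φ) = 2 * Pq φ X Y X (φ Y) := by
  have hmixed : ⟪R2 φ X (φ X) Y, φ Y⟫ =
      -(⟪X, Y⟫ ^ 2 + ⟪X, φ Y⟫ ^ 2) - 2 * (⟪X, X⟫ * ⟪Y, Y⟫) := by
    simp only [R2, inner_add_left, inner_sub_left, real_inner_smul_left, hX, inner_neg_left,
      inner_neg_right, hφ.inner_map_map hY]
    ring
  have hsec (Z : V) : ⟪R2 φ X Z X, Z⟫ = -3 * ⟪X, φ Z⟫ ^ 2 := by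
    simp only [R2, inner_add_left, inner_sub_left, real_inner_smul_left, hφ.inner_map_self,
      hφ.inner_map_swap X Z, hφ X Z]
    ring
  rw [kaehlerDefect_apply, hmixed, hsec, hsec, hY, inner_neg_right, Pq_map_right hφ hY]
  ring

theorem R3_eq_zero (hX : ⟪X, ξ⟫ = 0) (hY : ⟪Y, ξ⟫ = 0) (Z : V) : R3 ξ X Y Z = 0 := by
  simp [R3, hX, hY]

theorem kaehlerDefect_R3 (hX : ⟪X, ξ⟫ = 0) (hY : ⟪Y, ξ⟫ = 0) (hφX : ⟪φ X, ξ⟫ = 0)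
    (hφY : ⟪φ Y, ξ⟫ = 0) : kaehlerDefect φ X Y (R3 ξ) = 0 := by
  simp only [kaehlerDefect_apply, R3_eq_zero hX, hY, hφX, hφY, inner_zero_left, sub_zero]

theorem kaehlerDefect_R4 (hφ : IsSkewSymmetric φ) (hsym : h.IsSymmetric)
    (hanti : ∀ X, h (φ X) = -φ (h X)) (hY : φ (φ Y) = -Y) :
    kaehlerDefect φ X Y (R4 h) = -2 * Pq φ X Y (h X) (φ Y) := by
  have hmixed : ⟪R4 h X (φ X) Y, φ Y⟫ = 0 := by
    simp only [R4, inner_add_left, inner_sub_left, real_inner_smul_left, hanti, inner_neg_left,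
      hφ.inner_map_map hY, hφ X Y, hφ (h X) Y]
    ring
  have hsec (Z : V) : ⟪R4 h X Z X, Z⟫ =
      2 * (⟪X, Z⟫ * ⟪h X, Z⟫) - ⟪X, X⟫ * ⟪h Z, Z⟫ - ⟪X, h X⟫ * ⟪Z, Z⟫ := by
    have hZX : ⟪h Z, X⟫ = ⟪h X, Z⟫ := by rw [hsym, real_inner_comm]
    simp only [R4, inner_add_left, inner_sub_left, real_inner_smul_left, hZX,
      real_inner_comm X Z, real_inner_comm X (h X)]
    ring
  have hflip : ⟪h (φ Y), φ Y⟫ = -⟪h Y, Y⟫ := by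
    rw [hanti, inner_neg_left, hφ.inner_map_map hY]
  rw [kaehlerDefect_apply, hmixed, hsec, hsec, hflip, hφ.inner_map_map hY, Pq_map_right hφ hY]
  ring

theorem kaehlerDefect_gaussTensor (hφ : IsSkewSymmetric φ) (hA : A.IsSymmetric)
    (hanti : ∀ X, A (φ X) = -φ (A X)) (hY : φ (φ Y) = -Y) :
    kaehlerDefect φ X Y (gaussTensor A) = 0 := by
  have hmix : ⟪A (φ X), Y⟫ = ⟪A X, φ Y⟫ := by rw [hanti, inner_neg_left, hφ, neg_neg]
  have hneg (Z : V) : ⟪A (φ Z), φ Y⟫ = -⟪A Z, Y⟫ := by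
    rw [hanti, inner_neg_left, hφ.inner_map_map hY]
  have hcomm (Z : V) : ⟪A Z, X⟫ = ⟪A X, Z⟫ := by rw [hA, real_inner_comm]
  simp only [kaehlerDefect_apply, gaussTensor, inner_sub_left, real_inner_smul_left, hmix, hneg,
    hcomm Y, hcomm (φ Y)]
  ring

theorem R5_eq_gaussTensor_sub (φ h : V →ₗ[ℝ] V) :
    R5 φ h = gaussTensor h - gaussTensor (φ ∘ₗ h) := by
  funext X Y Z
  simp only [R5, gaussTensor, Pi.sub_apply, LinearMap.comp_apply]
  abel

theorem kaehlerDefect_R5 (hφ : IsSkewSymmetric φ) (hsym : h.IsSymmetric)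
    (hanti : ∀ X, h (φ X) = -φ (h X)) (hY : φ (φ Y) = -Y) :
    kaehlerDefect φ X Y (R5 φ h) = 0 := by
  have hanti_comp (X : V) : (φ ∘ₗ h) (φ X) = -φ ((φ ∘ₗ h) X) := by
    rw [LinearMap.comp_apply, hanti, map_neg, LinearMap.comp_apply]
  rw [R5_eq_gaussTensor_sub, map_sub, kaehlerDefect_gaussTensor hφ hsym hanti hY,
    kaehlerDefect_gaussTensor hφ (hφ.isSymmetric_comp hsym hanti) hanti_comp hY, sub_zero]

theorem R6_eq_zero (hX : ⟪X, ξ⟫ = 0) (hY : ⟪Y, ξ⟫ = 0) (Z : V) : R6 ξ h X Y Z = 0 := by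
  simp [R6, hX, hY]

theorem kaehlerDefect_R6 (hX : ⟪X, ξ⟫ = 0) (hY : ⟪Y, ξ⟫ = 0) (hφX : ⟪φ X, ξ⟫ = 0)
    (hφY : ⟪φ Y, ξ⟫ = 0) : kaehlerDefect φ X Y (R6 ξ h) = 0 := by
  simp only [kaehlerDefect_apply, R6_eq_zero hX, hY, hφX, hφY, inner_zero_left, sub_zero]

theorem kaehlerDefect_Rc (φ h : V →ₗ[ℝ] V) (ξ : V) (f₁ f₂ f₃ f₄ f₅ f₆ : ℝ) (X Y : V) :
    kaehlerDefect φ X Y (Rc φ h ξ f₁ f₂ f₃ f₄ f₅ f₆) =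
      f₁ * kaehlerDefect φ X Y R1 + f₂ * kaehlerDefect φ X Y (R2 φ)
        + f₃ * kaehlerDefect φ X Y (R3 ξ) + f₄ * kaehlerDefect φ X Y (R4 h)
        + f₅ * kaehlerDefect φ X Y (R5 φ h) + f₆ * kaehlerDefect φ X Y (R6 ξ h) := by
  have hRc : Rc φ h ξ f₁ f₂ f₃ f₄ f₅ f₆ =
      f₁ • R1 + f₂ • R2 φ + f₃ • R3 ξ + f₄ • R4 h + f₅ • R5 φ h + f₆ • R6 ξ h := rfl
  simp only [hRc, map_add, map_smul, smul_eq_mul]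

end

/-- For a metric f-structure (`φ³ + φ = 0`) the conditions on `X` and `Y` say that they lie in the
range of `φ`. -/
theorem stmt8_general (φ h : V →ₗ[ℝ] V) (ξ : V) {X Y : V} (f₁ f₂ f₃ f₄ f₅ f₆ : ℝ)
    (hφ : IsSkewSymmetric φ) (hξ : φ ξ = 0) (hsym : h.IsSymmetric)
    (hanti : ∀ X, h (φ X) = -φ (h X)) (hX : φ (φ X) = -X) (hY : φ (φ Y) = -Y) :
    Rq φ h ξ f₁ f₂ f₃ f₄ f₅ f₆ X (φ X) Y (φ Y) =
      Rq φ h ξ f₁ f₂ f₃ f₄ f₅ f₆ X Y X Y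
        + Rq φ h ξ f₁ f₂ f₃ f₄ f₅ f₆ X (φ Y) X (φ Y)
        - 2 * (f₁ - f₂) * Pq φ X Y X (φ Y)
        - 2 * f₄ * Pq φ X Y (h X) (φ Y) := by
  have hηX : ⟪X, ξ⟫ = 0 := hφ.inner_eq_zero_of_map_map hξ hX
  have hηY : ⟪Y, ξ⟫ = 0 := hφ.inner_eq_zero_of_map_map hξ hY
  have hηφ : ∀ Z, ⟪φ Z, ξ⟫ = 0 := hφ.inner_map_eq_zero hξ
  have hdefect := kaehlerDefect_Rc φ h ξ f₁ f₂ f₃ f₄ f₅ f₆ X Y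
  rw [kaehlerDefect_R1 hφ hY, kaehlerDefect_R2 hφ hX hY,
    kaehlerDefect_R3 hηX hηY (hηφ X) (hηφ Y), kaehlerDefect_R4 hφ hsym hanti hY,
    kaehlerDefect_R5 hφ hsym hanti hY, kaehlerDefect_R6 hηX hηY (hηφ X) (hηφ Y),
    kaehlerDefect_apply] at hdefect
  simp only [Rq]
  linarith

theorem stmt8 {V : Type*} [NormedAddCommGroup V] [InnerProductSpace ℝ V]
    (φ h : V →ₗ[ℝ] V) (ξ : V) (f₁ f₂ f₃ f₄ f₅ f₆ : ℝ)
    (hξ : ‖ξ‖ = 1)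
    (hφ2 : ∀ X : V, φ (φ X) = -X + ⟪X, ξ⟫ • ξ)
    (hmet : ∀ X Y : V, ⟪φ X, φ Y⟫ = ⟪X, Y⟫ - ⟪X, ξ⟫ * ⟪Y, ξ⟫)
    (hsym : ∀ X Y : V, ⟪h X, Y⟫ = ⟪X, h Y⟫)
    (hhξ : h ξ = 0)
    (hanti : ∀ X : V, h (φ X) = -φ (h X)) :
    ∀ X Y : V, ⟪X, ξ⟫ = 0 → ⟪Y, ξ⟫ = 0 →
      Rq φ h ξ f₁ f₂ f₃ f₄ f₅ f₆ X (φ X) Y (φ Y) =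
        Rq φ h ξ f₁ f₂ f₃ f₄ f₅ f₆ X Y X Y
          + Rq φ h ξ f₁ f₂ f₃ f₄ f₅ f₆ X (φ Y) X (φ Y)
          - 2 * (f₁ - f₂) * Pq φ X Y X (φ Y)
          - 2 * f₄ * Pq φ X Y (h X) (φ Y) := by
  intro X Y hX hY
  have hφ : IsAlmostContactMetric φ ξ := ⟨hξ, hφ2, hmet⟩
  exact stmt8_general φ h ξ f₁ f₂ f₃ f₄ f₅ f₆ hφ.isSkewSymmetric hφ.map_reeb hsym hanti
    (hφ.map_map_of_inner_reeb_eq_zero hX) (hφ.map_map_of_inner_reeb_eq_zero hY)
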